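/- For v ∈ R = ℂ[G], there exists w ∈ R satisfying (T − 1)·v = (S − 1)·w if and only if there exists r ∈ R with v = (y² + y + 1)·r, where y = S·T. That is, {v ∈ R : (T−1)·v ∈ (S−1)·R} is exactly the right ideal (y² + y + 1)·R. -/

import Mathlib

open scoped MatrixGroups

/-- `PSL₂(ℤ)`: the quotient of `SL₂(ℤ)` by its center `{±I}`. -/
abbrev PSL2Z : Type :=
  Matrix.SpecialLinearGroup (Fin 2) ℤ ⧸ Subgroup.center (Matrix.SpecialLinearGroup (Fin 2) ℤ)

/-- The image of `T = [[1,1],[0,1]]` in `PSL₂(ℤ)`. -/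
def Tg : PSL2Z := QuotientGroup.mk ModularGroup.T

/-- The image of `S = [[0,-1],[1,0]]` in `PSL₂(ℤ)`. -/
def Sg : PSL2Z := QuotientGroup.mk ModularGroup.S

/-- The element `x = S` of `PSL₂(ℤ)`. -/
def xg : PSL2Z := Sg

/-- The element `y = S·T` of `PSL₂(ℤ)`. -/
def yg : PSL2Z := Sg * Tg

/-- The embedding of the group `PSL₂(ℤ)` into its complex group algebra. -/
noncomputable def ofG : PSL2Z → MonoidAlgebra ℂ PSL2Z := MonoidAlgebra.of ℂ PSL2Z

/-- An energy on `SL₂(ℤ)`: `|r₁|² + |r₂|² + |r₁ + r₂|²` in terms of the rows. -/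
def energy (A : Matrix.SpecialLinearGroup (Fin 2) ℤ) : ℤ :=
  A.1 0 0 ^ 2 + A.1 0 1 ^ 2 + A.1 1 0 ^ 2 + A.1 1 1 ^ 2 +
    (A.1 0 0 + A.1 1 0) ^ 2 + (A.1 0 1 + A.1 1 1) ^ 2

/-- Dot product of the rows. -/
def rowDot (A : Matrix.SpecialLinearGroup (Fin 2) ℤ) : ℤ :=
  A.1 0 0 * A.1 1 0 + A.1 0 1 * A.1 1 1

lemma energy_mul_center (A c : Matrix.SpecialLinearGroup (Fin 2) ℤ)
    (hc : c ∈ Subgroup.center (Matrix.SpecialLinearGroup (Fin 2) ℤ)) :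
    energy (A * c) = energy A := by
  obtain ⟨r, hr, h⟩ := Matrix.SpecialLinearGroup.mem_center_iff.1 hc
  simp only [Fintype.card_fin] at hr
  have e : ∀ i j, c.1 i j = Matrix.scalar (Fin 2) r i j := fun i j => by rw [h]
  simp only [energy, Matrix.SpecialLinearGroup.coe_mul, Matrix.mul_apply, Fin.sum_univ_two, e,
    Matrix.scalar_apply, Matrix.diagonal_apply]
  simp
  linear_combination (A.1 0 0 ^ 2 + A.1 0 1 ^ 2 + A.1 1 0 ^ 2 + A.1 1 1 ^ 2 +
    (A.1 0 0 + A.1 1 0) ^ 2 + (A.1 0 1 + A.1 1 1) ^ 2) * hr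

/-- The energy descends to `PSL₂(ℤ)`. -/
noncomputable def energyG (g : PSL2Z) : ℤ := energy (Quotient.out g)

lemma energyG_mk (A : Matrix.SpecialLinearGroup (Fin 2) ℤ) :
    energyG (QuotientGroup.mk A) = energy A := by
  obtain ⟨c, hc⟩ := QuotientGroup.mk_out_eq_mul
    (Subgroup.center (Matrix.SpecialLinearGroup (Fin 2) ℤ)) A
  unfold energyG
  exact (congrArg energy hc).trans (energy_mul_center A c c.2)

lemma energy_S_mul (A : Matrix.SpecialLinearGroup (Fin 2) ℤ) :
    energy (ModularGroup.S * A) = energy A - 4 * rowDot A := by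
  simp [energy, rowDot, ModularGroup.coe_S, Matrix.mul_apply, Fin.sum_univ_two]
  ring

lemma energy_Y_mul (A : Matrix.SpecialLinearGroup (Fin 2) ℤ) :
    energy (ModularGroup.S * ModularGroup.T * A) = energy A := by
  simp [energy, ModularGroup.coe_S, ModularGroup.coe_T, Matrix.mul_apply, Fin.sum_univ_two]
  ring

lemma rowDot_Y_mul (A : Matrix.SpecialLinearGroup (Fin 2) ℤ) (h : 0 ≤ rowDot A) :
    rowDot (ModularGroup.S * ModularGroup.T * A) < 0 := by
  have hd := A.2
  rw [Matrix.det_fin_two] at hd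
  have hp : 0 < A.1 1 0 ^ 2 + A.1 1 1 ^ 2 := by
    by_contra hn
    have h1 : A.1 1 0 = 0 := by nlinarith [sq_nonneg (A.1 1 0), sq_nonneg (A.1 1 1)]
    have h2 : A.1 1 1 = 0 := by nlinarith [sq_nonneg (A.1 1 0), sq_nonneg (A.1 1 1)]
    rw [h1, h2] at hd
    simp at hd
  simp [rowDot, ModularGroup.coe_S, ModularGroup.coe_T, Matrix.mul_apply, Fin.sum_univ_two] at *
  nlinarith

lemma rowDot_YY_mul (A : Matrix.SpecialLinearGroup (Fin 2) ℤ) (h : 0 ≤ rowDot A) :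
    rowDot (ModularGroup.S * ModularGroup.T * (ModularGroup.S * ModularGroup.T * A)) < 0 := by
  have hd := A.2
  rw [Matrix.det_fin_two] at hd
  have hp : 0 < A.1 0 0 ^ 2 + A.1 0 1 ^ 2 := by
    by_contra hn
    have h1 : A.1 0 0 = 0 := by nlinarith [sq_nonneg (A.1 0 0), sq_nonneg (A.1 0 1)]
    have h2 : A.1 0 1 = 0 := by nlinarith [sq_nonneg (A.1 0 0), sq_nonneg (A.1 0 1)]
    rw [h1, h2] at hd
    simp at hd
  simp [rowDot, ModularGroup.coe_S, ModularGroup.coe_T, Matrix.mul_apply, Fin.sum_univ_two, Matrix.vecMul,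
    dotProduct] at *
  nlinarith

lemma Sg_sq : Sg * Sg = 1 := by
  unfold Sg
  rw [← QuotientGroup.mk_mul, QuotientGroup.eq_one_iff, Matrix.SpecialLinearGroup.mem_center_iff]
  refine ⟨-1, by simp, ?_⟩
  ext i j
  fin_cases i <;> fin_cases j <;> simp [ModularGroup.coe_S]

lemma yg_cube : yg * (yg * yg) = 1 := by
  unfold yg Sg Tg
  simp only [← QuotientGroup.mk_mul]
  rw [QuotientGroup.eq_one_iff, Matrix.SpecialLinearGroup.mem_center_iff]
  refine ⟨-1, by simp, ?_⟩
  ext i j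
  fin_cases i <;> fin_cases j <;> simp [ModularGroup.coe_S, ModularGroup.coe_T]

lemma energyG_key (g : PSL2Z) (h : energyG (Sg * g) ≤ energyG g) :
    energyG g < energyG (Sg * (yg * g)) ∧ energyG g < energyG (Sg * (yg * (yg * g))) := by
  induction g using QuotientGroup.induction_on with
  | H A =>
    unfold yg Sg Tg at *
    simp only [← QuotientGroup.mk_mul, energyG_mk] at *
    simp only [energy_S_mul, energy_Y_mul] at *
    have h0 : 0 ≤ rowDot A := by linarith
    have h1 := rowDot_Y_mul A h0
    have h2 := rowDot_YY_mul A h0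
    constructor <;> linarith

lemma fun_zero (u : PSL2Z → ℂ) (hf : (Function.support u).Finite)
    (hx : ∀ g, u g + u (Sg * g) = 0) (hy : ∀ g, u g + u (yg * g) + u (yg * (yg * g)) = 0) :
    ∀ g, u g = 0 := by
  by_contra! hne
  obtain ⟨g, hg, hmax⟩ := Set.exists_max_image (Function.support u) energyG hf hne
  have hS : ∀ k, u k ≠ 0 → u (Sg * k) ≠ 0 := by
    intro k hk h0
    have := hx k
    rw [h0, add_zero] at this
    exact hk this
  obtain ⟨k1, k2⟩ := energyG_key g (hmax _ (hS g hg))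
  by_cases h1 : u (yg * g) = 0
  · by_cases h2 : u (yg * (yg * g)) = 0
    · have := hy g
      rw [h1, h2, add_zero, add_zero] at this
      exact hg this
    · exact absurd (hmax _ (hS _ h2)) (not_le.2 k2)
  · exact absurd (hmax _ (hS _ h1)) (not_le.2 k1)

lemma ofG_mul (a b : PSL2Z) : ofG (a * b) = ofG a * ofG b := map_mul _ _ _

lemma ofG_one : ofG 1 = 1 := map_one _

lemma alg_zero (u : MonoidAlgebra ℂ PSL2Z) (hx : (1 + ofG Sg) * u = 0)
    (hy : (1 + ofG yg + ofG yg * ofG yg) * u = 0) : u = 0 := by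
  have key : ∀ (a g : PSL2Z), (ofG a * u).coeff g = u.coeff (a⁻¹ * g) := by
    intro a g
    simp [ofG]
  have hSi : Sg⁻¹ = Sg := inv_eq_of_mul_eq_one_left Sg_sq
  have hyi : (yg * yg)⁻¹ = yg := inv_eq_of_mul_eq_one_left yg_cube
  have hyinv : yg⁻¹ = yg * yg := inv_eq_of_mul_eq_one_right yg_cube
  have := fun_zero (fun g => u.coeff g) (u.coeff.hasFiniteSupport) (fun g => ?_) (fun g => ?_)
  · ext g
    exact this g
  · have := congrArg (fun z => z.coeff g) hx
    simpa [add_mul, key, hSi] using this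
  · have := congrArg (fun z => z.coeff g) hy
    rw [← ofG_mul] at this
    simp only [add_mul, one_mul, MonoidAlgebra.coeff_add, Finsupp.add_apply, key, hyi, hyinv,
      mul_assoc] at this
    simp at this
    linear_combination this

/-- In `R = ℂ[PSL₂(ℤ)]` with `y = ST`: there exists `w` with `(T-1)v = (S-1)w`
iff `v` lies in the right ideal `(y² + y + 1)·R`. -/
theorem T_sub_one_eq_S_sub_one_iff (v : MonoidAlgebra ℂ PSL2Z) :
    (∃ w : MonoidAlgebra ℂ PSL2Z, (ofG Tg - 1) * v = (ofG Sg - 1) * w) ↔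
    (∃ r : MonoidAlgebra ℂ PSL2Z, v = (ofG yg ^ 2 + ofG yg + 1) * r) := by
  have hT : ofG Tg = ofG Sg * ofG yg := by
    rw [← ofG_mul, yg, ← mul_assoc, Sg_sq, one_mul]
  have hS : ofG Sg * ofG Sg = 1 := by rw [← ofG_mul, Sg_sq, ofG_one]
  have hY : ofG yg * (ofG yg * ofG yg) = 1 := by rw [← ofG_mul, ← ofG_mul, yg_cube, ofG_one]
  rw [hT]
  generalize hs : ofG Sg = s at *
  generalize hyy : ofG yg = y at *
  constructor
  · rintro ⟨w, hw⟩
    have hu : (y - 1) * v = 0 := by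
      apply alg_zero
      · rw [hs]
        calc (1 + s) * ((y - 1) * v) = (1 + s) * ((s * y - 1) * v) + (1 - s * s) * (y * v) := by
              noncomm_ring
          _ = (1 - s * s) * w * (-1) + (1 - s * s) * (y * v) := by rw [hw]; noncomm_ring
          _ = 0 := by rw [hS]; simp
      · rw [hyy]
        calc (1 + y + y * y) * ((y - 1) * v) = (y * (y * y) - 1) * v := by noncomm_ring
          _ = 0 := by rw [hY]; simp
    have hv : y * v = v := by
      rw [sub_mul, one_mul, sub_eq_zero] at hu
      exact hu
    refine ⟨(1 / 3 : ℂ) • v, ?_⟩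
    rw [mul_smul_comm, add_mul, add_mul, pow_two, mul_assoc, hv, hv, one_mul]
    module
  · rintro ⟨r, hr⟩
    have hv : y * v = v := by
      rw [hr]
      calc y * ((y ^ 2 + y + 1) * r) = (y * (y * y) + y ^ 2 + y) * r := by noncomm_ring
        _ = _ := by rw [hY]; noncomm_ring
    exact ⟨v, by rw [sub_mul, sub_mul, mul_assoc, hv]⟩
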